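/- Let 𝒟 ⊆ ℝⁿ be a set, let f : ℝⁿ → ℝⁿ and g : ℝⁿ → ℝ^{n×m} be continuous, let u : 𝒟 → ℝᵐ be continuous, let h : ℝⁿ → ℝ be continuously differentiable, and let α : ℝ → ℝ be a locally Lipschitz extended class-K function (strictly increasing with α(0) = 0). Assume that for every x ∈ 𝒟, ⟨∇h(x), f(x) + g(x)u(x)⟩ ≥ -α(h(x)). Let T ∈ (0, ∞] and let x : [0, T) → ℝⁿ be a differentiable curve satisfying x'(t) = f(x(t)) + g(x(t))u(x(t)) and x(t) ∈ 𝒟 for all t ∈ [0, T). If h(x(0)) ≥ 0, then h(x(t)) ≥ 0 for all t ∈ [0, T); equivalently, x(0) ∈ 𝒞 := {x ∈ ℝⁿ | h(x) ≥ 0} implies x(t) ∈ 𝒞 for all t ∈ [0, T). -/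

import Mathlib

/-!
At every time at which `h ∘ x` is negative, the barrier inequality and `α ≤ 0` on the negative
half-line give `(h ∘ x)' ≥ -α (h (x t)) ≥ 0`. A function which starts nonnegative and does not
decrease while it is negative stays nonnegative.
-/

open Set

theorem const_le_image_of_deriv_right_nonneg_of_lt {φ φ' : ℝ → ℝ} {a b c : ℝ}
    (hφ : ContinuousOn φ (Icc a b))
    (hφ' : ∀ s ∈ Ico a b, HasDerivWithinAt φ (φ' s) (Ici s) s)
    (ha : c ≤ φ a) (hnonneg : ∀ s ∈ Ico a b, φ s < c → 0 ≤ φ' s) :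
    ∀ ⦃t⦄, t ∈ Icc a b → c ≤ φ t := by
  intro t ht
  -- The fence has positive slope because the fencing theorem requires a strict inequality between
  -- the derivatives at a point of contact.
  have below_fence (ε : ℝ) (hε : 0 < ε) : -φ t ≤ ε * (1 + (t - a)) - c := by
    refine image_le_of_deriv_right_lt_deriv_boundary (f := fun s => -φ s) (f' := fun s => -φ' s)
      (B := fun s => ε * (1 + (s - a)) - c) (B' := fun _ => ε)
      hφ.neg (fun s hs => (hφ' s hs).neg) (by linarith) (fun s => ?_) (fun s hs contact => ?_) ht
    · simpa only [mul_one, id] using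
        ((((hasDerivAt_id s).sub_const a).const_add 1).const_mul ε).sub_const c
    · have gap_pos : 0 < ε * (1 + (s - a)) := mul_pos hε (by linarith [hs.1])
      have below_c : φ s < c := by linarith
      linarith [hnonneg s hs below_c]
  have height_pos : 0 < 1 + (t - a) := by linarith [ht.1]
  refine le_of_forall_pos_le_add fun δ hδ => ?_
  have below_fence_δ := below_fence (δ / (1 + (t - a))) (div_pos hδ height_pos)
  rw [div_mul_cancel₀ δ height_pos.ne'] at below_fence_δ
  linarith

theorem const_le_image_of_hasDerivWithinAt_nonneg_of_lt {φ φ' : ℝ → ℝ} {I : Set ℝ} {a c : ℝ}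
    (hI : I.OrdConnected) (hφ : ∀ s ∈ I, HasDerivWithinAt φ (φ' s) I s)
    (haI : a ∈ I) (ha : c ≤ φ a) (hnonneg : ∀ s ∈ I, φ s < c → 0 ≤ φ' s) :
    ∀ t ∈ I, a ≤ t → c ≤ φ t := by
  intro t ht hat
  have Icc_subset : Icc a t ⊆ I := hI.out haI ht
  have Ico_subset : Ico a t ⊆ I := Ico_subset_Icc_self.trans Icc_subset
  have hasDeriv_right (s : ℝ) (hs : s ∈ Ico a t) : HasDerivWithinAt φ (φ' s) (Ici s) s :=
    (hφ s (Ico_subset hs)).mono_of_mem_nhdsWithin <|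
      Filter.mem_of_superset (Icc_mem_nhdsGE hs.2) (hI.out (Ico_subset hs) ht)
  exact const_le_image_of_deriv_right_nonneg_of_lt
    (fun s hs => (hφ s (Icc_subset hs)).continuousWithinAt.mono Icc_subset)
    hasDeriv_right ha (fun s hs => hnonneg s (Ico_subset hs)) (right_mem_Icc.2 hat)

theorem cbf_forward_invariance_general {E : Type*} [NormedAddCommGroup E] [NormedSpace ℝ E]
    {𝒟 : Set E} {v : ℝ → E → E} {h : E → ℝ} (hh : ∀ z ∈ 𝒟, DifferentiableAt ℝ h z)
    {α : ℝ → ℝ} (hα : ∀ r < 0, α r ≤ 0) {I : Set ℝ} (hI : I.OrdConnected)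
    (hcbf : ∀ t ∈ I, ∀ z ∈ 𝒟, -α (h z) ≤ fderiv ℝ h z (v t z))
    {x : ℝ → E} (hx : IsIntegralCurveOn x v I) (hxD : MapsTo x I 𝒟)
    {t₀ : ℝ} (ht₀ : t₀ ∈ I) (h0 : 0 ≤ h (x t₀)) :
    ∀ t ∈ I, t₀ ≤ t → 0 ≤ h (x t) :=
  const_le_image_of_hasDerivWithinAt_nonneg_of_lt hI
    (fun t ht => (hh (x t) (hxD ht)).hasFDerivAt.comp_hasDerivWithinAt t (hx t ht)) ht₀ h0
    fun t ht hneg => (neg_nonneg.2 (hα _ hneg)).trans (hcbf t ht (x t) (hxD ht))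

theorem ordConnected_setOf_nonneg_and_coe_lt (T : EReal) :
    {s : ℝ | 0 ≤ s ∧ (s : EReal) < T}.OrdConnected :=
  ordConnected_Ici.inter (ordConnected_Iio.preimage_mono EReal.coe_strictMono.monotone)


/-- Forward-invariance part of Lemma 1: for the control system
`ẋ = f x + g x · u x` with continuous `f`, `g`, `u` on `𝒟`, if `h` is a `C¹`
function satisfying the control barrier function inequality
`⟨∇h x, f x + g x · u x⟩ ≥ -α (h x)` on `𝒟` for a locally Lipschitz extended
class-K function `α`, then along any solution `x : [0, T) → ℝⁿ` remaining in
`𝒟`, `h (x 0) ≥ 0` implies `h (x t) ≥ 0` for all `t ∈ [0, T)`. -/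
theorem cbf_forward_invariance {n m : ℕ}
    (𝒟 : Set (Fin n → ℝ))
    (f : (Fin n → ℝ) → (Fin n → ℝ))
    (g : (Fin n → ℝ) → (Fin n → Fin m → ℝ))
    (u : (Fin n → ℝ) → (Fin m → ℝ))
    (hf : Continuous f) (hg : Continuous g) (hu : ContinuousOn u 𝒟)
    (h : (Fin n → ℝ) → ℝ) (hh : ContDiff ℝ 1 h)
    (α : ℝ → ℝ) (hα_lip : LocallyLipschitz α) (hα_mono : StrictMono α) (hα0 : α 0 = 0)
    (hcbf : ∀ z ∈ 𝒟, fderiv ℝ h z (f z + fun i => ∑ j, g z i j * u z j) ≥ -α (h z))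
    (T : EReal) (hT : 0 < T)
    (x : ℝ → (Fin n → ℝ))
    (hx : ∀ t : ℝ, 0 ≤ t → (t : EReal) < T →
      HasDerivWithinAt x (f (x t) + fun i => ∑ j, g (x t) i j * u (x t) j)
        {s : ℝ | 0 ≤ s ∧ (s : EReal) < T} t)
    (hxD : ∀ t : ℝ, 0 ≤ t → (t : EReal) < T → x t ∈ 𝒟)
    (h0 : 0 ≤ h (x 0)) :
    ∀ t : ℝ, 0 ≤ t → (t : EReal) < T → 0 ≤ h (x t) := by
  have α_nonpos (r : ℝ) (hr : r < 0) : α r ≤ 0 := (hα_mono hr).le.trans_eq hα0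
  exact fun t ht0 htT => cbf_forward_invariance_general
    (fun z _ => hh.differentiable one_ne_zero z) α_nonpos (ordConnected_setOf_nonneg_and_coe_lt T)
    (fun _ _ => hcbf) (fun s hs => hx s hs.1 hs.2) (fun s hs => hxD s hs.1 hs.2)
    ⟨le_rfl, hT⟩ h0 t ⟨ht0, htT⟩ ht0
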